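/- arXiv:2309.09188 — 3 statements merged into one kernel-verified Lean document; each statement's English description precedes it below -/
import Mathlib

section
/- Let I ⊂ S be a monomial ideal with linear powers (i.e., I^k has a linear resolution for all k ≥ 1) such that depth S/I = 0. Then v(I^k) = α(I)·k − 1 for all k ≥ 1. -/
open MvPolynomial

noncomputable section

variable (K : Type*) [Field K]

/-- The set of associated primes of `S/I`. -/
def assPrimes {σ : Type*} (I : Ideal (MvPolynomial σ K)) : Set (Ideal (MvPolynomial σ K)) :=
  associatedPrimes (MvPolynomial σ K) (MvPolynomial σ K ⧸ I)

/-- The v-number of `I` at a prime `p`: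
`min {d : ∃ homogeneous f of degree d with (I : f) = p}`. -/
def vNumberAt {σ : Type*} (I p : Ideal (MvPolynomial σ K)) : ℕ :=
  sInf {d | ∃ f : MvPolynomial σ K, f.IsHomogeneous d ∧ I.colon (Ideal.span {f}) = p}

/-- The v-number of `I`:
`min {d : ∃ homogeneous f of degree d with (I : f) ∈ Ass(I)}`. -/
def vNumber {σ : Type*} (I : Ideal (MvPolynomial σ K)) : ℕ :=
  sInf {d | ∃ f : MvPolynomial σ K, f.IsHomogeneous d ∧
    I.colon (Ideal.span {f}) ∈ assPrimes K I}

/-- The initial degree `α(I) = min {d : I_d ≠ 0}`. -/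
def initialDegree {σ : Type*} (I : Ideal (MvPolynomial σ K)) : ℕ :=
  sInf {d | ∃ f ∈ I, f ≠ 0 ∧ f.IsHomogeneous d}

/-- A monomial ideal: an ideal generated by monomials. -/
def IsMonomialIdeal {σ : Type*} (I : Ideal (MvPolynomial σ K)) : Prop :=
  ∃ A : Set (σ →₀ ℕ), I = Ideal.span ((fun m => (monomial m (1 : K) : MvPolynomial σ K)) '' A)

/-- `I` has a `d`-linear (free) resolution: there is a free resolution
`⋯ → F_1 → F_0 → I → 0` in which `F_0` has a basis mapping to homogeneous generators of
degree `d` and all the syzygy matrices consist of homogeneous linear forms (so `F_i` is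
generated in degree `d + i`).  This happens iff the minimal graded free resolution of `I`
is linear, i.e. `β_{i,j}(I) = 0` for `j ≠ i + d`. -/
def HasLinearResolution {σ : Type*} (I : Ideal (MvPolynomial σ K)) (d : ℕ) : Prop :=
  ∃ (b : ℕ → ℕ) (g : Fin (b 0) → MvPolynomial σ K)
    (M : ∀ i : ℕ, Matrix (Fin (b i)) (Fin (b (i + 1))) (MvPolynomial σ K)),
    (∀ j, (g j).IsHomogeneous d) ∧
    Ideal.span (Set.range g) = I ∧
    (∀ i j l, ((M i) j l).IsHomogeneous 1) ∧
    (∀ v : Fin (b 0) → MvPolynomial σ K,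
      (∑ j, v j * g j) = 0 ↔ ∃ w, (M 0).mulVec w = v) ∧
    (∀ (i : ℕ) (v : Fin (b (i + 1)) → MvPolynomial σ K),
      (M i).mulVec v = 0 ↔ ∃ w, (M (i + 1)).mulVec w = v)

/-!
A homogeneous socle element of `S/I` represents a nonzero class of `Tor_0(S/I, S)` killed by the
maximal ideal `𝔪`.  Dividing out the variables one at a time, each connecting homomorphism moves it
one step further along the resolution, raising its internal degree by one; after all `n` variables
it is a nonzero class of `Tor_n(S/I, K)`.  A `d`-linear resolution leaves only the degree
`n + d - 1` there, so the socle element `f` has degree `d - 1`.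

For `u ∈ I` of degree `d`, the product `u ^ (k - 1) * f` has degree `d * k - 1`, hence is not in
`I ^ k`, and it is killed by `𝔪` modulo `I ^ k`; so `(I ^ k : u ^ (k - 1) * f) = 𝔪`.  Conversely a
prime `(I ^ k : q)` contains a variable, as `I` is monomial, and multiplying `q` by it lands in
`I ^ k ⊆ 𝔪 ^ (d * k)`.
-/

section ExactModulo

variable {R L M N P : Type*} [CommRing R] [AddCommGroup L] [Module R L] [AddCommGroup M]
  [Module R M] [AddCommGroup N] [Module R N] [AddCommGroup P] [Module R P]
  {h : L →ₗ[R] M} {g : M →ₗ[R] N} {f : N →ₗ[R] P} {J 𝔪 : Ideal R} {x : R}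

/-- Exactness of `L → M → N` at `M` after reduction modulo the ideal `J`, for maps that compose
to zero: only the inclusion of the kernel in the image is recorded, and no quotient modules are
formed. -/
def IsExactModulo (J : Ideal R) (h : L →ₗ[R] M) (g : M →ₗ[R] N) : Prop :=
  (J • ⊤ : Submodule R N).comap g ≤ LinearMap.range h ⊔ J • ⊤

/-- The vector `v : N` represents a nonzero element of the socle (the elements killed by `𝔪`) of
the reduction of `coker g` modulo the ideal `J`. -/
def IsSocleModulo (𝔪 J : Ideal R) (g : M →ₗ[R] N) (v : N) : Prop :=
  v ∉ LinearMap.range g ⊔ (J • ⊤ : Submodule R N) ∧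
    ∀ y ∈ 𝔪, y • v ∈ LinearMap.range g ⊔ (J • ⊤ : Submodule R N)

theorem mem_range_sup_iff_exists_sub_mem {Q : Submodule R N} {v : N} :
    v ∈ LinearMap.range g ⊔ Q ↔ ∃ w, v - g w ∈ Q := by
  simp only [Submodule.mem_sup, LinearMap.mem_range, exists_exists_eq_and]
  refine exists_congr fun w => ⟨?_, fun hw => ⟨_, hw, add_sub_cancel _ _⟩⟩
  rintro ⟨z, hz, rfl⟩
  rwa [add_sub_cancel_left]

theorem mem_sup_span_singleton_smul_top_iff {v : N} :
    v ∈ ((J ⊔ Ideal.span {x}) • ⊤ : Submodule R N) ↔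
      ∃ w, v - x • w ∈ (J • ⊤ : Submodule R N) := by
  have hrange : (Ideal.span {x} • ⊤ : Submodule R N) = LinearMap.range (LinearMap.lsmul R N x) := by
    rw [Submodule.ideal_span_singleton_smul, LinearMap.range_eq_map]
    rfl
  rw [Submodule.sup_smul, sup_comm, hrange, mem_range_sup_iff_exists_sub_mem]
  rfl

theorem map_mem_smul_top (g : M →ₗ[R] N) {v : M} (hv : v ∈ (J • ⊤ : Submodule R M)) :
    g v ∈ (J • ⊤ : Submodule R N) :=
  Submodule.smul_top_le_comap_smul_top J g hv

theorem isExactModulo_bot (hexact : Function.Exact h g) : IsExactModulo ⊥ h g := by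
  intro v hv
  rw [Submodule.bot_smul, Submodule.mem_comap, Submodule.mem_bot] at hv
  exact Submodule.mem_sup_left ((hexact v).1 hv)

theorem IsExactModulo.sup_span_singleton (hx : IsSMulRegular (P ⧸ (J • ⊤ : Submodule R P)) x)
    (hgf : ∀ v, f (g v) = 0) (hN : IsExactModulo J g f) (hM : IsExactModulo J h g) :
    IsExactModulo (J ⊔ Ideal.span {x}) h g := by
  intro v hv
  obtain ⟨w, hw⟩ := mem_sup_span_singleton_smul_top_iff.1 hv
  have hfw : f w ∈ (J • ⊤ : Submodule R P) := by
    refine mem_of_isSMulRegular_quotient_of_smul_mem hx (neg_mem_iff.1 ?_)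
    simpa [hgf] using map_mem_smul_top f hw
  obtain ⟨u, hu⟩ := mem_range_sup_iff_exists_sub_mem.1 (hN hfw)
  have hgvu : g (v - x • u) ∈ (J • ⊤ : Submodule R N) := by
    have : g (v - x • u) = (g v - x • w) + x • (w - g u) := by
      rw [map_sub, map_smul, smul_sub]; abel
    rw [this]
    exact add_mem hw (Submodule.smul_mem _ x hu)
  obtain ⟨t, ht⟩ := mem_range_sup_iff_exists_sub_mem.1 (hM hgvu)
  refine mem_range_sup_iff_exists_sub_mem.2 ⟨t, mem_sup_span_singleton_smul_top_iff.2 ⟨u, ?_⟩⟩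
  rwa [sub_right_comm]

-- This is the connecting map `Tor_i(-, R/J) → Tor_{i+1}(-, R/(J, x))`, made explicit.
theorem IsSocleModulo.sup_span_singleton {v : N} {u : M}
    (hx : IsSMulRegular (N ⧸ (J • ⊤ : Submodule R N)) x) (hhg : ∀ w, g (h w) = 0)
    (hM : IsExactModulo J h g) (hv : IsSocleModulo 𝔪 J g v)
    (hu : x • v - g u ∈ (J • ⊤ : Submodule R N)) :
    IsSocleModulo 𝔪 (J ⊔ Ideal.span {x}) h u := by
  refine ⟨fun hmem => hv.1 ?_, fun y hy => ?_⟩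
  · obtain ⟨w, hw⟩ := mem_range_sup_iff_exists_sub_mem.1 hmem
    obtain ⟨t, ht⟩ := mem_sup_span_singleton_smul_top_iff.1 hw
    refine mem_range_sup_iff_exists_sub_mem.2
      ⟨t, mem_of_isSMulRegular_quotient_of_smul_mem hx ?_⟩
    have : x • (v - g t) = (x • v - g u) + g (u - h w - x • t) := by
      simp only [map_sub, map_smul, hhg, smul_sub]; abel
    rw [this]
    exact add_mem hu (map_mem_smul_top g ht)
  · obtain ⟨w, hw⟩ := mem_range_sup_iff_exists_sub_mem.1 (hv.2 y hy)
    have hg : g (y • u - x • w) ∈ (J • ⊤ : Submodule R N) := by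
      have : g (y • u - x • w) = x • (y • v - g w) - y • (x • v - g u) := by
        simp only [map_sub, map_smul, smul_sub, smul_comm x y]; abel
      rw [this]
      exact sub_mem (Submodule.smul_mem _ x hw) (Submodule.smul_mem _ y hu)
    obtain ⟨t, ht⟩ := mem_range_sup_iff_exists_sub_mem.1 (hM hg)
    refine mem_range_sup_iff_exists_sub_mem.2 ⟨t, mem_sup_span_singleton_smul_top_iff.2 ⟨w, ?_⟩⟩
    rwa [sub_right_comm]

theorem mem_ideal_smul_top_pi_iff {ι : Type*} [Finite ι] {v : ι → R} :
    v ∈ (J • ⊤ : Submodule R (ι → R)) ↔ ∀ i, v i ∈ J := by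
  classical
  have := Fintype.ofFinite ι
  refine ⟨fun hv i => ?_, fun hv => ?_⟩
  · simpa using map_mem_smul_top (LinearMap.proj i) hv
  · rw [pi_eq_sum_univ' v]
    exact sum_mem fun i _ => Submodule.smul_mem_smul (hv i) trivial

end ExactModulo

section Polynomial

variable {σ R : Type*} [CommRing R]

attribute [local instance] MvPolynomial.gradedAlgebra

theorem homogeneousComponent_add_mul {q : MvPolynomial σ R} {a : ℕ} (hq : q.IsHomogeneous a)
    (c : ℕ) (p : MvPolynomial σ R) :
    homogeneousComponent (a + c) (q * p) = q * homogeneousComponent c p := by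
  have hcomp (i : ℕ) (φ : MvPolynomial σ R) :
      (DirectSum.decompose (homogeneousSubmodule σ R) φ i : MvPolynomial σ R) =
        homogeneousComponent i φ := decomposition.decompose'_apply φ i
  simpa only [hcomp] using
    DirectSum.coe_decompose_mul_add_of_left_mem (homogeneousSubmodule σ R) (b := p) (j := c) hq

theorem degree_eq_of_mem_support {f : MvPolynomial σ R} {e : ℕ} (hf : f.IsHomogeneous e)
    {m : σ →₀ ℕ} (hm : m ∈ f.support) : m.degree = e :=
  not_imp_comm.1 hf.coeff_eq_zero (mem_support_iff.1 hm)

theorem mem_pow_idealOfVars_iff_le {f : MvPolynomial σ R} {e d : ℕ} (hf : f.IsHomogeneous e)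
    (hf0 : f ≠ 0) : f ∈ idealOfVars σ R ^ d ↔ d ≤ e := by
  rw [mem_pow_idealOfVars_iff]
  refine ⟨fun h => ?_, fun h m hm => by rwa [degree_eq_of_mem_support hf hm]⟩
  obtain ⟨m, hm⟩ := support_nonempty.2 hf0
  exact degree_eq_of_mem_support hf hm ▸ h m hm

theorem isHomogeneous_span_X_image (s : Set σ) :
    (Ideal.span (X '' s : Set (MvPolynomial σ R))).IsHomogeneous (homogeneousSubmodule σ R) :=
  Ideal.homogeneous_span _ _ <| Set.forall_mem_image.2 fun i _ => ⟨1, isHomogeneous_X R i⟩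

theorem mem_span_X_image_of_X_mul_mem {s : Set σ} {i : σ} (hi : i ∉ s) {p : MvPolynomial σ R}
    (hp : X i * p ∈ Ideal.span (X '' s)) : p ∈ Ideal.span (X '' s) := by
  rw [mem_ideal_span_X_image] at hp ⊢
  intro m hm
  obtain ⟨j, hj, hmj⟩ := hp (Finsupp.single i 1 + m) <| by
    rwa [mem_support_iff, coeff_X_mul, ← mem_support_iff]
  have hij : i ≠ j := fun h => hi (h ▸ hj)
  exact ⟨j, hj, by simpa [Finsupp.single_apply, hij] using hmj⟩

theorem isSMulRegular_X_pi_quotient {ι : Type*} [Finite ι] {s : Set σ} {i : σ} (hi : i ∉ s) :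
    IsSMulRegular ((ι → MvPolynomial σ R) ⧸
      (Ideal.span (X '' s : Set (MvPolynomial σ R)) • ⊤ :
        Submodule (MvPolynomial σ R) (ι → MvPolynomial σ R))) (X i : MvPolynomial σ R) := by
  rw [isSMulRegular_quotient_iff_mem_of_smul_mem]
  simp only [mem_ideal_smul_top_pi_iff]
  exact fun v hv j => mem_span_X_image_of_X_mul_mem hi (hv j)

theorem span_X_image_insert (i : σ) (s : Set σ) :
    Ideal.span (X '' insert i s : Set (MvPolynomial σ R)) =
      Ideal.span (X '' s) ⊔ Ideal.span {X i} := by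
  rw [Set.image_insert_eq, Ideal.span_insert, sup_comm]

end Polynomial

section LinearComplex

variable {σ R : Type*} [CommRing R]

attribute [local instance] MvPolynomial.gradedAlgebra

theorem smul_sub_mulVec_homogeneousComponent_mem {ι κ : Type*} [Finite ι] [Fintype κ]
    {J : Ideal (MvPolynomial σ R)} (hJ : J.IsHomogeneous (homogeneousSubmodule σ R))
    {A : Matrix ι κ (MvPolynomial σ R)} {x : MvPolynomial σ R} {v : ι → MvPolynomial σ R}
    {u : κ → MvPolynomial σ R} {a b c d : ℕ} (hA : ∀ j l, (A j l).IsHomogeneous a)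
    (hx : x.IsHomogeneous b) (hv : ∀ j, (v j).IsHomogeneous c) (hdeg : a + d = b + c)
    (hu : x • v - A.mulVec u ∈ (J • ⊤ : Submodule (MvPolynomial σ R) (ι → MvPolynomial σ R))) :
    x • v - A.mulVec (fun l => homogeneousComponent d (u l)) ∈
      (J • ⊤ : Submodule (MvPolynomial σ R) (ι → MvPolynomial σ R)) := by
  rw [mem_ideal_smul_top_pi_iff] at hu ⊢
  intro j
  have hxv : homogeneousComponent (b + c) (x * v j) = x * v j :=
    homogeneousComponent_eq_self (hx.mul (hv j))
  have hAu : homogeneousComponent (b + c) (A.mulVec u j) =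
      A.mulVec (fun l => homogeneousComponent d (u l)) j := by
    simp only [Matrix.mulVec, dotProduct, map_sum, ← hdeg, homogeneousComponent_add_mul (hA j _)]
  have := homogeneousComponent_mem_of_mem hJ (hu j) (b + c)
  rwa [Pi.sub_apply, Pi.smul_apply, smul_eq_mul, map_sub, hxv, hAu] at this

variable {ι : ℕ → Type*} [∀ i, Fintype (ι i)]
  {A : ∀ i, Matrix (ι i) (ι (i + 1)) (MvPolynomial σ R)}

theorem isExactModulo_span_X_image
    (hexact : ∀ i, Function.Exact (A (i + 1)).mulVecLin (A i).mulVecLin) (s : Finset σ) :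
    ∀ i, s.card ≤ i →
      IsExactModulo (Ideal.span (X '' (s : Set σ))) (A (i + 1)).mulVecLin (A i).mulVecLin := by
  classical
  induction s using Finset.induction_on with
  | empty =>
    intro i _
    simpa using isExactModulo_bot (hexact i)
  | insert x s hx ih =>
    intro i hi
    rw [Finset.card_insert_of_notMem hx] at hi
    obtain ⟨i, rfl⟩ := Nat.exists_eq_succ_of_ne_zero (Nat.ne_zero_of_lt hi)
    rw [Finset.coe_insert, span_X_image_insert]
    exact IsExactModulo.sup_span_singleton (isSMulRegular_X_pi_quotient (by simpa using hx))
      (hexact i).apply_apply_eq_zero (ih i (by omega)) (ih (i + 1) (by omega))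

variable {a c : ℕ → ℕ} {v : ι 0 → MvPolynomial σ R}

theorem exists_isHomogeneous_isSocleModulo_span_X_image
    (hexact : ∀ i, Function.Exact (A (i + 1)).mulVecLin (A i).mulVecLin)
    (hA : ∀ i j l, (A i j l).IsHomogeneous (a i)) (hdeg : ∀ i, a i + c (i + 1) = 1 + c i)
    (hv : ∀ j, (v j).IsHomogeneous (c 0))
    (hsocle : IsSocleModulo (idealOfVars σ R) ⊥ (A 0).mulVecLin v) (s : Finset σ) :
    ∀ r, s.card = r → ∃ w : ι r → MvPolynomial σ R, (∀ j, (w j).IsHomogeneous (c r)) ∧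
      IsSocleModulo (idealOfVars σ R) (Ideal.span (X '' (s : Set σ))) (A r).mulVecLin w := by
  classical
  induction s using Finset.induction_on with
  | empty =>
    intro r hr
    obtain rfl : r = 0 := hr.symm
    exact ⟨v, hv, by simpa using hsocle⟩
  | insert i s hi ih =>
    rintro _ rfl
    rw [Finset.card_insert_of_notMem hi, Finset.coe_insert, span_X_image_insert]
    obtain ⟨w, hw, hws⟩ := ih _ rfl
    obtain ⟨u, hu⟩ := mem_range_sup_iff_exists_sub_mem.1
      (hws.2 (X i) (Ideal.subset_span (Set.mem_range_self i)))
    exact ⟨_, fun j => homogeneousComponent_isHomogeneous _ _,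
      hws.sup_span_singleton (isSMulRegular_X_pi_quotient (by simpa using hi))
        (hexact _).apply_apply_eq_zero (isExactModulo_span_X_image hexact s _ le_rfl)
        (smul_sub_mulVec_homogeneousComponent_mem (isHomogeneous_span_X_image _) (hA _)
          (isHomogeneous_X R i) hw (hdeg _) hu)⟩

theorem degree_eq_zero_of_isSocleModulo [Fintype σ]
    (hexact : ∀ i, Function.Exact (A (i + 1)).mulVecLin (A i).mulVecLin)
    (hA : ∀ i j l, (A i j l).IsHomogeneous (a i)) (hdeg : ∀ i, a i + c (i + 1) = 1 + c i)
    (hv : ∀ j, (v j).IsHomogeneous (c 0))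
    (hsocle : IsSocleModulo (idealOfVars σ R) ⊥ (A 0).mulVecLin v) :
    c (Fintype.card σ) = 0 := by
  obtain ⟨w, hw, hws⟩ :=
    exists_isHomogeneous_isSocleModulo_span_X_image hexact hA hdeg hv hsocle Finset.univ _ rfl
  by_contra hc
  refine hws.1 (Submodule.mem_sup_right (mem_ideal_smul_top_pi_iff.2 fun j => ?_))
  rw [Finset.coe_univ, Set.image_univ, ← pow_one (Ideal.span _), mem_pow_idealOfVars_iff]
  intro m hm
  rw [degree_eq_of_mem_support (hw j) hm]
  exact Nat.one_le_iff_ne_zero.2 hc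

end LinearComplex

section LinearResolution

variable {K} {σ : Type*} {I : Ideal (MvPolynomial σ K)} {d : ℕ}

attribute [local instance] MvPolynomial.gradedAlgebra

namespace HasLinearResolution

theorem isHomogeneous (hI : HasLinearResolution K I d) :
    I.IsHomogeneous (homogeneousSubmodule σ K) := by
  obtain ⟨b, g, A, hg, rfl, -⟩ := hI
  exact Ideal.homogeneous_span _ _ <| Set.forall_mem_range.2 fun j => ⟨d, hg j⟩

theorem le_pow_idealOfVars (hI : HasLinearResolution K I d) : I ≤ idealOfVars σ K ^ d := by
  obtain ⟨b, g, A, hg, rfl, -⟩ := hI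
  rw [Ideal.span_le, Set.range_subset_iff]
  intro j
  rw [SetLike.mem_coe, mem_pow_idealOfVars_iff]
  exact fun m hm => (degree_eq_of_mem_support (hg j) hm).ge

theorem exists_mem_isHomogeneous (hI : HasLinearResolution K I d) (hI0 : I ≠ ⊥) :
    ∃ u ∈ I, u ≠ 0 ∧ u.IsHomogeneous d := by
  obtain ⟨b, g, A, hg, rfl, -⟩ := hI
  obtain ⟨_, ⟨j, rfl⟩, hj⟩ : ∃ x ∈ Set.range g, x ≠ 0 := by
    simpa only [ne_eq, Ideal.span_eq_bot, not_forall, exists_prop] using hI0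
  exact ⟨g j, Ideal.subset_span ⟨j, rfl⟩, hj, hg j⟩

theorem initialDegree_eq (hI : HasLinearResolution K I d) (hI0 : I ≠ ⊥) :
    initialDegree K I = d := by
  have hd := hI.exists_mem_isHomogeneous hI0
  refine le_antisymm (Nat.sInf_le hd) (le_csInf ⟨d, hd⟩ ?_)
  rintro e ⟨q, hq, hq0, hqe⟩
  exact (mem_pow_idealOfVars_iff_le hqe hq0).1 (hI.le_pow_idealOfVars hq)

/-- The ranks `1, b 0, b 1, …` of the augmented complex `⋯ → F_1 → F_0 → S`. -/
def augmentedRank (b : ℕ → ℕ) : ℕ → ℕ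
  | 0 => 1
  | i + 1 => b i

/-- The matrices of the augmented complex `⋯ → F_1 → F_0 → S`: the row `g` of generators,
followed by the syzygy matrices `A i`. -/
def augmentedMatrix {b : ℕ → ℕ} (g : Fin (b 0) → MvPolynomial σ K)
    (A : ∀ i, Matrix (Fin (b i)) (Fin (b (i + 1))) (MvPolynomial σ K)) :
    ∀ i, Matrix (Fin (augmentedRank b i)) (Fin (augmentedRank b (i + 1))) (MvPolynomial σ K)
  | 0 => Matrix.replicateRow (Fin 1) g
  | i + 1 => A i

theorem augmentedMatrix_zero_mulVec_eq_const_iff {b : ℕ → ℕ} {g : Fin (b 0) → MvPolynomial σ K}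
    {A : ∀ i, Matrix (Fin (b i)) (Fin (b (i + 1))) (MvPolynomial σ K)}
    {w : Fin (b 0) → MvPolynomial σ K} {p : MvPolynomial σ K} :
    ((augmentedMatrix g A 0).mulVec w = fun _ => p) ↔ ∑ j, w j * g j = p := by
  have hrow : (augmentedMatrix g A 0).mulVec w = fun _ => ∑ j, w j * g j :=
    _root_.funext fun _ => dotProduct_comm g w
  rw [hrow]
  exact ⟨fun h => congrFun h (0 : Fin 1), fun h => _root_.funext fun _ => h⟩

theorem const_mem_range_augmentedMatrix_zero_iff {b : ℕ → ℕ} {g : Fin (b 0) → MvPolynomial σ K}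
    {A : ∀ i, Matrix (Fin (b i)) (Fin (b (i + 1))) (MvPolynomial σ K)} {p : MvPolynomial σ K} :
    (fun _ => p) ∈ LinearMap.range (augmentedMatrix g A 0).mulVecLin ↔
      p ∈ Ideal.span (Set.range g) := by
  rw [Ideal.mem_span_range_iff_exists_fun]
  exact exists_congr fun w => augmentedMatrix_zero_mulVec_eq_const_iff

theorem exact_augmentedMatrix {b : ℕ → ℕ} {g : Fin (b 0) → MvPolynomial σ K}
    {A : ∀ i, Matrix (Fin (b i)) (Fin (b (i + 1))) (MvPolynomial σ K)}
    (hgA : ∀ v, ∑ j, v j * g j = 0 ↔ ∃ w, (A 0).mulVec w = v)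
    (hA : ∀ i v, (A i).mulVec v = 0 ↔ ∃ w, (A (i + 1)).mulVec w = v) (i : ℕ) :
    Function.Exact (augmentedMatrix g A (i + 1)).mulVecLin (augmentedMatrix g A i).mulVecLin := by
  intro v
  cases i with
  | zero => exact augmentedMatrix_zero_mulVec_eq_const_iff.trans (hgA v)
  | succ i => exact hA i v

theorem add_one_eq_of_socle [Finite σ] [Nonempty σ] (hI : HasLinearResolution K I d) {e : ℕ}
    {f : MvPolynomial σ K} (hf : f.IsHomogeneous e) (hfI : f ∉ I) (hX : ∀ i, X i * f ∈ I) :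
    e + 1 = d := by
  have := Fintype.ofFinite σ
  have hde : d ≤ 1 + e := by
    obtain ⟨i⟩ := ‹Nonempty σ›
    have hf0 : f ≠ 0 := fun h => hfI (h ▸ I.zero_mem)
    exact (mem_pow_idealOfVars_iff_le ((isHomogeneous_X K i).mul hf)
      (mul_ne_zero (X_ne_zero i) hf0)).1 (hI.le_pow_idealOfVars (hX i))
  have hm : ∀ y ∈ idealOfVars σ K, y * f ∈ I := by
    have : idealOfVars σ K ≤ I.colon (Ideal.span {f}) :=
      Ideal.span_le.2 <| Set.range_subset_iff.2 fun i => Ideal.mem_colon_span_singleton.2 (hX i)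
    exact fun y hy => Ideal.mem_colon_span_singleton.1 (this hy)
  obtain ⟨b, g, A, hg, rfl, hA, hgA, hAA⟩ := hI
  let a : ℕ → ℕ := fun i => Nat.casesOn i d fun _ => 1
  let c : ℕ → ℕ := fun i => Nat.casesOn i e fun _ => e + 1 - d
  have hentries : ∀ i j l, (augmentedMatrix g A i j l).IsHomogeneous (a i)
    | 0, _, l => hg l
    | i + 1, j, l => hA i j l
  have hdeg : ∀ i, a i + c (i + 1) = 1 + c i
    | 0 => by change d + (e + 1 - d) = 1 + e; omega
    | i + 1 => rfl
  have hsocle : IsSocleModulo (idealOfVars σ K) ⊥ (augmentedMatrix g A 0).mulVecLin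
      (fun _ => f) := by
    simp only [IsSocleModulo, Submodule.bot_smul, sup_bot_eq]
    exact ⟨mt const_mem_range_augmentedMatrix_zero_iff.1 hfI,
      fun y hy => const_mem_range_augmentedMatrix_zero_iff.2 (hm y hy)⟩
  have hc := degree_eq_zero_of_isSocleModulo (exact_augmentedMatrix hgA hAA) hentries hdeg
    (fun _ => hf) hsocle
  obtain ⟨n, hn⟩ := Nat.exists_eq_succ_of_ne_zero (Fintype.card_ne_zero (α := σ))
  have : e + 1 - d = 0 := by rwa [hn] at hc
  omega

end HasLinearResolution

end LinearResolution

section VNumber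

variable {K} {σ : Type*} {I : Ideal (MvPolynomial σ K)} {d : ℕ}

theorem colon_bot_mk {R : Type*} [CommRing R] {I : Ideal R} {f : R} :
    (⊥ : Submodule R (R ⧸ I)).colon {Ideal.Quotient.mk I f} = I.colon (Ideal.span {f}) := by
  ext r
  rw [Ideal.mem_colon_span_singleton, Submodule.mem_colon_singleton, Submodule.mem_bot,
    ← Ideal.Quotient.eq_zero_iff_mem]
  rfl

theorem colon_span_singleton_mem_assPrimes_iff {f : MvPolynomial σ K} :
    I.colon (Ideal.span {f}) ∈ assPrimes K I ↔ (I.colon (Ideal.span {f})).IsPrime := by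
  refine ⟨fun h => h.1, fun h => ⟨h, Ideal.Quotient.mk I f, ?_⟩⟩
  rw [colon_bot_mk, h.radical]

theorem exists_colon_span_singleton_eq [Finite σ] {p : Ideal (MvPolynomial σ K)}
    (hp : p ∈ assPrimes K I) :
    ∃ f : MvPolynomial σ K, I.colon (Ideal.span {f}) = p := by
  obtain ⟨-, x, rfl⟩ := isAssociatedPrime_iff.1 hp
  obtain ⟨f, rfl⟩ := Ideal.Quotient.mk_surjective x
  exact ⟨f, colon_bot_mk.symm⟩

theorem isMaximal_idealOfVars : (idealOfVars σ K).IsMaximal := by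
  have hker : idealOfVars σ K = RingHom.ker (constantCoeff : MvPolynomial σ K →+* K) := by
    ext p
    rw [← pow_one (idealOfVars σ K), mem_pow_idealOfVars_iff', RingHom.mem_ker,
      constantCoeff_eq]
    simp only [Nat.lt_one_iff, Finsupp.degree_eq_zero_iff, forall_eq]
  rw [hker]
  exact RingHom.ker_isMaximal_of_surjective _ fun r => ⟨C r, constantCoeff_C σ r⟩

theorem le_of_mem_assPrimes [Finite σ] {p : Ideal (MvPolynomial σ K)} (hp : p ∈ assPrimes K I) :
    I ≤ p := by
  obtain ⟨f, rfl⟩ := exists_colon_span_singleton_eq hp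
  exact Ideal.le_colon

theorem initialDegree_bot : initialDegree K (⊥ : Ideal (MvPolynomial σ K)) = 0 := by
  have : {d | ∃ f ∈ (⊥ : Ideal (MvPolynomial σ K)), f ≠ 0 ∧ f.IsHomogeneous d} = ∅ := by
    ext; simp
  rw [initialDegree, this, Nat.sInf_empty]

theorem vNumber_eq_zero_of_isPrime (hI : I.IsPrime) : vNumber K I = 0 := by
  have hcolon : I.colon (Ideal.span {(1 : MvPolynomial σ K)}) = I := by
    ext r
    rw [Ideal.mem_colon_span_singleton, mul_one]
  refine Nat.le_zero.1 (Nat.sInf_le ⟨1, isHomogeneous_one _ _, ?_⟩)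
  rwa [colon_span_singleton_mem_assPrimes_iff, hcolon]

theorem HasLinearResolution.exists_socle_element [Finite σ] (hI : HasLinearResolution K I d)
    (hI0 : I ≠ ⊥) (hdepth : idealOfVars σ K ∈ assPrimes K I) :
    ∃ (e : ℕ) (f : MvPolynomial σ K),
      e + 1 = d ∧ f.IsHomogeneous e ∧ f ≠ 0 ∧ ∀ i, X i * f ∈ I := by
  obtain ⟨f, hf⟩ := exists_colon_span_singleton_eq hdepth
  have hne : Nonempty σ := by
    by_contra! hσ
    refine hI0 (le_bot_iff.1 ((le_of_mem_assPrimes hdepth).trans_eq ?_))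
    rw [idealOfVars, Set.range_eq_empty, Ideal.span_empty]
  have hfI : f ∉ I := by
    intro hmem
    refine hdepth.1.ne_top ?_
    rwa [← hf, Ideal.eq_top_iff_one, Ideal.mem_colon_span_singleton, one_mul]
  obtain ⟨e, he⟩ : ∃ e, homogeneousComponent e f ∉ I :=
    not_forall.1 (mt (mem_iff_homogeneousComponent_mem hI.isHomogeneous f).2 hfI)
  have hfe : (homogeneousComponent e f).IsHomogeneous e := homogeneousComponent_isHomogeneous e f
  have hX (i : σ) : X i * homogeneousComponent e f ∈ I := by
    have hXf : X i * f ∈ I := by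
      rw [← Ideal.mem_colon_span_singleton, hf]
      exact Ideal.subset_span (Set.mem_range_self i)
    rw [← homogeneousComponent_add_mul (isHomogeneous_X K i)]
    exact homogeneousComponent_mem_of_mem hI.isHomogeneous hXf _
  exact ⟨e, _, hI.add_one_eq_of_socle hfe he hX, hfe, fun h0 => he (h0 ▸ I.zero_mem), hX⟩

theorem colon_pow_succ_eq_idealOfVars (hId : I ≤ idealOfVars σ K ^ d) {u f : MvPolynomial σ K}
    {e k : ℕ} (hu : u ∈ I) (hu0 : u ≠ 0) (hud : u.IsHomogeneous d) (hf : f.IsHomogeneous e)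
    (hf0 : f ≠ 0) (hed : e < d) (hX : ∀ i, X i * f ∈ I) :
    (I ^ (k + 1)).colon (Ideal.span {u ^ k * f}) = idealOfVars σ K := by
  refine (isMaximal_idealOfVars.eq_of_le ?_ ?_).symm
  · rw [Ne, Ideal.eq_top_iff_one, Ideal.mem_colon_span_singleton, one_mul]
    intro hmem
    have hpow : u ^ k * f ∈ idealOfVars σ K ^ (d * (k + 1)) := by
      rw [pow_mul]
      exact Ideal.pow_right_mono hId _ hmem
    have hle := (mem_pow_idealOfVars_iff_le ((hud.pow k).mul hf)
      (mul_ne_zero (pow_ne_zero k hu0) hf0)).1 hpow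
    rw [mul_add_one] at hle
    omega
  · rw [idealOfVars, Ideal.span_le, Set.range_subset_iff]
    intro i
    rw [SetLike.mem_coe, Ideal.mem_colon_span_singleton, mul_left_comm, pow_succ]
    exact Ideal.mul_mem_mul (Ideal.pow_mem_pow hu k) (hX i)

theorem mul_le_add_one_of_isPrime_colon_pow (hId : I ≤ idealOfVars σ K ^ d)
    (hlinear : ∀ p : Ideal (MvPolynomial σ K), p.IsPrime → I ≤ p →
      ∃ ℓ ∈ p, ℓ ≠ 0 ∧ ℓ.IsHomogeneous 1) {c k : ℕ} {q : MvPolynomial σ K}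
    (hq : q.IsHomogeneous c) (hp : ((I ^ k).colon (Ideal.span {q})).IsPrime) : d * k ≤ c + 1 := by
  obtain ⟨ℓ, hℓ, hℓ0, hℓ1⟩ := hlinear _ hp (hp.le_of_pow_le Ideal.le_colon)
  rw [Ideal.mem_colon_span_singleton] at hℓ
  have hq0 : q ≠ 0 := by
    rintro rfl
    refine hp.ne_top ((Ideal.eq_top_iff_one _).2 ?_)
    rw [Ideal.mem_colon_span_singleton, mul_zero]
    exact zero_mem _
  have hpow : ℓ * q ∈ idealOfVars σ K ^ (d * k) := by
    rw [pow_mul]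
    exact Ideal.pow_right_mono hId k hℓ
  rw [add_comm c]
  exact (mem_pow_idealOfVars_iff_le (hℓ1.mul hq) (mul_ne_zero hℓ0 hq0)).1 hpow

theorem IsMonomialIdeal.exists_X_mem (hI : IsMonomialIdeal K I) (hI0 : I ≠ ⊥)
    {p : Ideal (MvPolynomial σ K)} (hp : p.IsPrime) (hIp : I ≤ p) : ∃ i, X i ∈ p := by
  obtain ⟨B, rfl⟩ := hI
  obtain ⟨m, hm⟩ : B.Nonempty := by
    rw [Set.nonempty_iff_ne_empty]
    rintro rfl
    exact hI0 (by rw [Set.image_empty, Ideal.span_empty])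
  have hmp : monomial m (1 : K) ∈ p := hIp (Ideal.subset_span (Set.mem_image_of_mem _ hm))
  rw [monomial_eq, C_1, one_mul, Finsupp.prod, hp.prod_mem_iff] at hmp
  obtain ⟨i, -, hi⟩ := hmp
  exact ⟨i, hp.mem_of_pow_mem _ hi⟩

end VNumber

theorem stmt8_general {σ : Type*} [Finite σ] {I : Ideal (MvPolynomial σ K)} {d : ℕ}
    (hlin : HasLinearResolution K I d)
    (hlinear : I ≠ ⊥ → ∀ p : Ideal (MvPolynomial σ K), p.IsPrime → I ≤ p →
      ∃ ℓ ∈ p, ℓ ≠ 0 ∧ ℓ.IsHomogeneous 1)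
    (hdepth : Ideal.span (Set.range X) ∈ assPrimes K I) :
    ∀ k : ℕ, 1 ≤ k → vNumber K (I ^ k) = initialDegree K I * k - 1 := by
  intro k hk
  obtain ⟨k, rfl⟩ := Nat.exists_eq_add_of_le' hk
  obtain rfl | hI0 := eq_or_ne I ⊥
  · rw [initialDegree_bot, zero_mul, zero_tsub, Ideal.bot_pow k.succ_ne_zero,
      vNumber_eq_zero_of_isPrime Ideal.isPrime_bot]
  rw [hlin.initialDegree_eq hI0]
  obtain ⟨u, hu, hu0, hud⟩ := hlin.exists_mem_isHomogeneous hI0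
  obtain ⟨e, f, rfl, hf, hf0, hX⟩ := hlin.exists_socle_element hI0 hdepth
  have hle := hlin.le_pow_idealOfVars
  have hcolon := colon_pow_succ_eq_idealOfVars (k := k) hle hu hu0 hud hf hf0 e.lt_succ_self hX
  have hwitness : (u ^ k * f).IsHomogeneous ((e + 1) * (k + 1) - 1) ∧
      (I ^ (k + 1)).colon (Ideal.span {u ^ k * f}) ∈ assPrimes K (I ^ (k + 1)) :=
    ⟨(hud.pow k).mul hf, colon_span_singleton_mem_assPrimes_iff.2 (hcolon ▸ hdepth.1)⟩
  refine le_antisymm (Nat.sInf_le ⟨_, hwitness⟩) (le_csInf ⟨_, _, hwitness⟩ ?_)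
  rintro c ⟨q, hq, hqp⟩
  exact Nat.sub_le_iff_le_add.2 (mul_le_add_one_of_isPrime_colon_pow hle (hlinear hI0) hq hqp.1)

/-- For a monomial ideal `I` with linear powers and `depth S/I = 0` (equivalently,
`m ∈ Ass(I)`), one has `v(I^k) = α(I)·k - 1` for all `k ≥ 1`. -/
theorem stmt8 {n : ℕ} (I : Ideal (MvPolynomial (Fin n) K))
    (hmon : IsMonomialIdeal K I)
    (hlin : ∀ k : ℕ, 1 ≤ k → ∃ d : ℕ, HasLinearResolution K (I ^ k) d)
    (hdepth : Ideal.span (Set.range (X : Fin n → MvPolynomial (Fin n) K)) ∈ assPrimes K I) :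
    ∀ k : ℕ, 1 ≤ k → vNumber K (I ^ k) = initialDegree K I * k - 1 := by
  obtain ⟨d, hd⟩ := hlin 1 le_rfl
  refine stmt8_general K (pow_one I ▸ hd) (fun hI0 p hp hIp => ?_) hdepth
  exact (hmon.exists_X_mem hI0 hp hIp).imp' X fun i hi => ⟨hi, X_ne_zero i, isHomogeneous_X K i⟩

end
end

section
/- Let G be a finite simple graph on vertex set [n] whose edge ideal I(G) ⊂ S has a linear resolution, and let x_1 > x_2 > ··· > x_n be a perfect elimination order of the complementary graph G^c. Then the colon ideal (I(G) : x_1) equals the prime ideal (x_j : j ∈ N_G(1)) generated by the variables indexed by the open neighborhood of vertex 1 in G. -/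
open MvPolynomial

noncomputable section

variable (K : Type*) [Field K]

/-- The edge ideal `I(G) = (x_i x_j : {i,j} ∈ E(G))` of a finite simple graph `G`. -/
def edgeIdeal {n : ℕ} (G : SimpleGraph (Fin n)) : Ideal (MvPolynomial (Fin n) K) :=
  Ideal.span {f | ∃ i j, G.Adj i j ∧ f = X i * X j}

/-!
Every `x_j` with `j` a neighbour of `v` multiplies `x_v` into the edge ideal, so the content lies in
the other inclusion. The vertices outside `N_G(v)` are `v` and its neighbours in the complement;
when the latter form a clique of the complement, `N_G(v)` meets every edge, so the edge ideal lies
in `(x_j : j ∈ N_G(v))`. As `v ∉ N_G(v)`, multiplication by `x_v` does not affect membership in that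
ideal. In a perfect elimination order the first vertex has this clique property.
-/

section Graph

variable {V : Type*}

theorem isVertexCover_neighborSet_iff {G : SimpleGraph V} {v : V} :
    G.IsVertexCover (G.neighborSet v) ↔ Gᶜ.IsClique (Gᶜ.neighborSet v) := by
  have nonneighbors : (G.neighborSet v)ᶜ = insert v (Gᶜ.neighborSet v) := by
    rw [SimpleGraph.neighborSet_compl, Set.insert_sdiff_singleton, Set.insert_eq_of_mem]
    exact G.notMem_neighborSet_self
  rw [← SimpleGraph.isIndepSet_compl_iff_isVertexCover, nonneighbors, ← SimpleGraph.isClique_compl,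
    SimpleGraph.isClique_insert]
  exact and_iff_left fun _ hw _ ↦ hw

theorem isClique_neighborSet_of_isBot [PartialOrder V] {H : SimpleGraph V} {v : V} (hv : IsBot v)
    (hpeo : ∀ j k, v < j → v < k → j ≠ k → H.Adj v j → H.Adj v k → H.Adj j k) :
    H.IsClique (H.neighborSet v) :=
  fun j hj k hk hjk ↦
    hpeo j k ((hv j).lt_of_ne hj.ne) ((hv k).lt_of_ne hk.ne) hjk hj hk

end Graph

section EdgeIdeal

variable {R σ : Type*} [CommSemiring R]

theorem colon_X_span_X_image {s : Set σ} {v : σ} (hv : v ∉ s) :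
    (Ideal.span (X '' s : Set (MvPolynomial σ R))).colon {X v} = Ideal.span (X '' s) := by
  refine le_antisymm (fun f hf ↦ ?_) Ideal.le_colon
  rw [Submodule.mem_colon_singleton, smul_eq_mul, mem_ideal_span_X_image] at hf
  refine mem_ideal_span_X_image.2 fun m hm ↦ ?_
  have shifted_mem : m + Finsupp.single v 1 ∈ (f * X v).support := by
    rwa [mem_support_iff, coeff_mul_X, ← mem_support_iff]
  obtain ⟨i, hi, hmi⟩ := hf _ shifted_mem
  have hvi : v ≠ i := fun h ↦ hv (h ▸ hi)
  exact ⟨i, hi, by simpa [Finsupp.single_apply, hvi] using hmi⟩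

variable (R) in
/-- The edge ideal of a simple graph on an arbitrary vertex type, over a commutative semiring;
`edgeIdeal` is the case of the vertex type `Fin n` and a field of coefficients. -/
def graphEdgeIdeal (G : SimpleGraph σ) : Ideal (MvPolynomial σ R) :=
  Ideal.span {f | ∃ i j, G.Adj i j ∧ f = X i * X j}

variable {G : SimpleGraph σ}

theorem X_mul_X_mem_graphEdgeIdeal {i j : σ} (hij : G.Adj i j) :
    X i * X j ∈ graphEdgeIdeal R G :=
  Ideal.subset_span ⟨i, j, hij, rfl⟩

theorem graphEdgeIdeal_le_span_X_image {c : Set σ} (hc : G.IsVertexCover c) :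
    graphEdgeIdeal R G ≤ Ideal.span (X '' c) := by
  refine Ideal.span_le.2 ?_
  rintro _ ⟨i, j, hij, rfl⟩
  rcases hc hij with hi | hj
  · exact Ideal.mul_mem_right _ _ (Ideal.subset_span ⟨i, hi, rfl⟩)
  · exact Ideal.mul_mem_left _ _ (Ideal.subset_span ⟨j, hj, rfl⟩)

theorem span_X_image_neighborSet_le_colon (v : σ) :
    Ideal.span (X '' G.neighborSet v) ≤ (graphEdgeIdeal R G).colon {X v} := by
  refine Ideal.span_le.2 ?_
  rintro _ ⟨j, hj, rfl⟩
  exact Submodule.mem_colon_singleton.2 (X_mul_X_mem_graphEdgeIdeal hj.symm)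

theorem stmt12_general {v : σ} (hv : Gᶜ.IsClique (Gᶜ.neighborSet v)) :
    (graphEdgeIdeal R G).colon (Ideal.span {(X v : MvPolynomial σ R)}) =
      Ideal.span (X '' G.neighborSet v) := by
  rw [Ideal.colon_span]
  refine le_antisymm ?_ (span_X_image_neighborSet_le_colon v)
  calc (graphEdgeIdeal R G).colon {X v}
      ≤ (Ideal.span (X '' G.neighborSet v)).colon {X v} :=
        Submodule.colon_mono
          (graphEdgeIdeal_le_span_X_image (isVertexCover_neighborSet_iff.2 hv)) le_rfl
    _ = Ideal.span (X '' G.neighborSet v) := colon_X_span_X_image G.notMem_neighborSet_self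

end EdgeIdeal

/-- If the edge ideal `I(G)` has a linear resolution and `x_1 > x_2 > ⋯ > x_n` is a perfect
elimination order of the complementary graph `G^c`, then
`(I(G) : x_1) = (x_j : j ∈ N_G(1))`. -/
theorem stmt12 {n : ℕ} (hn : 0 < n) (G : SimpleGraph (Fin n))
    (hlin : HasLinearResolution K (edgeIdeal K G) 2)
    (hpeo : ∀ i j k : Fin n, i < j → i < k → j ≠ k →
      Gᶜ.Adj i j → Gᶜ.Adj i k → Gᶜ.Adj j k) :
    (edgeIdeal K G).colon (Ideal.span {(X (⟨0, hn⟩ : Fin n) : MvPolynomial (Fin n) K)}) =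
      Ideal.span ((fun j => (X j : MvPolynomial (Fin n) K)) ''
        {j | G.Adj ⟨0, hn⟩ j}) := by
  have hbot : IsBot (⟨0, hn⟩ : Fin n) := fun j ↦ Fin.mk_le_of_le_val j.val.zero_le
  exact stmt12_general (isClique_neighborSet_of_isBot hbot (hpeo _))

end
end

section
/- Let G be a finite simple graph whose edge ideal I(G) ⊂ S has a linear resolution. Then v(I(G)^k) = 2k − 1 for all k ≥ 1. -/
open MvPolynomial

noncomputable section

variable (K : Type*) [Field K]

/-!
If `I(G)` has a linear resolution, its Koszul homology vanishes off the linear strand, so a Koszul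
chain of quadrics that is a cycle modulo `I(G)` can be changed within `I(G)` to an honest cycle.
Suppose a vertex `b`, together with a connected set `A` away from it in the complement of `G`,
violated chordality of the complement at `s` and `t`. Then `x_b x_s e_{A ∪ {t}}` is a cycle modulo
`I(G)`; in an honest cycle congruent to it the coefficients of `x_b x_v e_{A ∪ {s, t} \ {v}}`,
signs aside, agree along edges of the complement, hence for `v = s` and `v = t`, where they are
`±1` and `0`. So the complement of `G` is chordal (Fröberg) and, not being complete, has two
nonadjacent simplicial vertices `x` and `y` (Dirac). That is, `xy` is an edge of `G` and the
neighbours of `x` cover all edges of `G`.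

Then `(I(G)^k : x (xy)^(k-1))` is the prime ideal generated by the neighbours of `x`: the variables
`z` adjacent to `x` satisfy `z x (xy)^(k-1) ∈ I(G)^k`, and conversely `I(G)^k` lies in the `k`-th
power of that prime, while `x (xy)^(k-1)` has order only `k - 1` along it. This gives the upper
bound. For the lower bound, a prime ideal `(I(G)^k : f)` contains `(xy)^k`, hence `x` or `y`, and
then `I(G)^k`, which starts in degree `2k`, contains a nonzero form of degree `deg f + 1`.
-/

section Koszul

variable {σ R M N : Type*} [LinearOrder σ] [CommRing R] [AddCommGroup M] [Module R M]
  [AddCommGroup N] [Module R N]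

/-- The sign with which `e_a` moves past the factors of `e_A` preceding it in the exterior
algebra. -/
def koszulSign (a : σ) (A : Finset σ) : ℤˣ := (-1) ^ (A.filter (· < a)).card

lemma koszulSign_erase_self (a : σ) (A : Finset σ) : koszulSign a (A.erase a) = koszulSign a A := by
  rw [koszulSign, koszulSign, Finset.filter_erase, Finset.erase_eq_of_notMem (by simp)]

lemma koszulSign_insert_self (a : σ) (A : Finset σ) :
    koszulSign a (insert a A) = koszulSign a A := by
  rw [koszulSign, koszulSign, Finset.filter_insert, if_neg (lt_irrefl a)]

lemma koszulSign_insert_of_lt {a b : σ} {A : Finset σ} (hab : a < b) (ha : a ∉ A) :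
    koszulSign b (insert a A) = -koszulSign b A := by
  rw [koszulSign, koszulSign, Finset.filter_insert, if_pos hab,
    Finset.card_insert_of_notMem (by simp [ha]), pow_succ, mul_neg_one]

lemma koszulSign_insert_of_gt {a b : σ} {A : Finset σ} (hab : b < a) :
    koszulSign b (insert a A) = koszulSign b A := by
  rw [koszulSign, koszulSign, Finset.filter_insert, if_neg hab.not_gt]

lemma koszulSign_mul_koszulSign_insert {a b : σ} {A : Finset σ} (hab : a ≠ b) (ha : a ∉ A)
    (hb : b ∉ A) :
    koszulSign a A * koszulSign b (insert a A) =
      -(koszulSign b A * koszulSign a (insert b A)) := by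
  rcases hab.lt_or_gt with h | h
  · rw [koszulSign_insert_of_lt h ha, koszulSign_insert_of_gt h, mul_neg, mul_comm]
  · rw [koszulSign_insert_of_lt h hb, koszulSign_insert_of_gt h, mul_neg, neg_neg, mul_comm]

variable [Fintype σ]

/-- The differential of the Koszul complex `K(x; M)`. A chain `∑ y_A e_A` is encoded as the
family `A ↦ y_A`, all homological degrees `#A` taken together, so the value of the differential
at `A` is the coefficient of `e_A`. -/
def koszulD (x : σ → R) : (Finset σ → M) →ₗ[R] (Finset σ → M) where
  toFun y A := ∑ a ∈ Aᶜ, koszulSign a A • x a • y (insert a A)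
  map_add' y z := by
    ext A
    simp only [Pi.add_apply, smul_add, Finset.sum_add_distrib]
  map_smul' r y := by
    ext A
    simp only [Pi.smul_apply, RingHom.id_apply, Finset.smul_sum]
    refine Finset.sum_congr rfl fun a _ => ?_
    rw [smul_comm (x a) r, smul_comm (koszulSign a A) r]

lemma koszulD_apply (x : σ → R) (y : Finset σ → M) (A : Finset σ) :
    koszulD x y A = ∑ a ∈ Aᶜ, koszulSign a A • x a • y (insert a A) :=
  rfl

lemma koszulD_comp (x : σ → R) (f : M →ₗ[R] N) (y : Finset σ → M) :
    koszulD x (f ∘ y) = f ∘ koszulD x y := by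
  ext A
  simp only [koszulD_apply, Function.comp_apply, map_sum, Units.smul_def, map_zsmul, map_smul]

lemma koszulD_pi_apply {ι : Type*} (x : σ → R) (y : Finset σ → ι → M) (A : Finset σ) (i : ι) :
    koszulD x y A i = koszulD x (fun B => y B i) A :=
  (congrFun (koszulD_comp x (LinearMap.proj i : (ι → M) →ₗ[R] M) y) A).symm

lemma koszulD_koszulD (x : σ → R) (y : Finset σ → M) : koszulD x (koszulD x y) = 0 := by
  ext A
  simp only [koszulD_apply, Finset.smul_sum, Pi.zero_apply]
  rw [Finset.sum_sigma']
  refine Finset.sum_involution (fun p _ => ⟨p.2, p.1⟩) ?_ ?_ ?_ (fun _ _ => rfl)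
  · rintro ⟨a, b⟩ hab
    simp only [Finset.mem_sigma, Finset.mem_compl, Finset.mem_insert, not_or] at hab
    obtain ⟨ha, hba, hb⟩ := hab
    simp only [smul_comm (x _) (koszulSign _ _), smul_smul (koszulSign _ _)]
    rw [koszulSign_mul_koszulSign_insert (Ne.symm hba) ha hb, smul_comm (x b), Finset.insert_comm b,
      Units.neg_smul, neg_add_cancel]
  · rintro ⟨a, b⟩ hab _ h
    simp only [Finset.mem_sigma, Finset.mem_compl, Finset.mem_insert, not_or] at hab
    exact hab.2.1 (congrArg Sigma.fst h)
  · rintro ⟨a, b⟩ hab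
    simp only [Finset.mem_sigma, Finset.mem_compl, Finset.mem_insert, not_or] at hab ⊢
    exact ⟨hab.2.2, Ne.symm hab.2.1, hab.1⟩

end Koszul

section KoszulX

variable {σ R : Type*} [Fintype σ] [LinearOrder σ] [CommRing R]

lemma isHomogeneous_koszulD_X {y : Finset σ → MvPolynomial σ R} {d : ℕ}
    (hy : ∀ A, (y A).IsHomogeneous d) (A : Finset σ) :
    (koszulD (X (R := R)) y A).IsHomogeneous (d + 1) := by
  rw [koszulD_apply]
  refine IsHomogeneous.sum _ _ _ fun a _ => ?_
  rw [Units.smul_def, add_comm]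
  exact Submodule.smul_of_tower_mem (homogeneousSubmodule σ R (1 + d)) _
    ((isHomogeneous_X R a).mul (hy _))

lemma koszulD_X_single_mem {I : Ideal (MvPolynomial σ R)} {B : Finset σ} {p : MvPolynomial σ R}
    (hp : ∀ a ∈ B, X a * p ∈ I) (A : Finset σ) :
    koszulD (X (R := R)) (Pi.single B p) A ∈ I := by
  rw [koszulD_apply]
  refine Ideal.sum_mem _ fun a _ => ?_
  rw [Units.smul_def]
  refine zsmul_mem ?_ _
  by_cases hB : insert a A = B
  · rw [hB, Pi.single_eq_same]
    exact hp a (hB ▸ Finset.mem_insert_self a A)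
  · rw [Pi.single_eq_of_ne hB, smul_zero]
    exact I.zero_mem

lemma coeff_koszulD_X (y : Finset σ → MvPolynomial σ R) (A : Finset σ) (m : σ →₀ ℕ) :
    coeff m (koszulD (X (R := R)) y A) = ∑ a ∈ m.support \ A,
      koszulSign a A • coeff (m - Finsupp.single a 1) (y (insert a A)) := by
  simp only [koszulD_apply, coeff_sum, Units.smul_def, coeff_smul, smul_eq_mul, coeff_X_mul',
    smul_ite, smul_zero]
  rw [← Finset.sum_filter]
  refine Finset.sum_congr (Finset.ext fun a => ?_) fun _ _ => rfl
  rw [Finset.mem_filter, Finset.mem_compl, Finset.mem_sdiff, and_comm]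

/-- The signed coefficient of `x^m x_v` in the entry of `y` at `W \ {v}`. The cycle condition
for `y` compares the values at different `v ∈ W`. -/
def facetCoeff (y : Finset σ → MvPolynomial σ R) (m : σ →₀ ℕ) (W : Finset σ) (v : σ) : R :=
  koszulSign v W • coeff (m + Finsupp.single v 1) (y (W.erase v))

lemma facetCoeff_eq_of_koszulD_eq_zero {y : Finset σ → MvPolynomial σ R} {m : σ →₀ ℕ}
    {W : Finset σ} {u v : σ} (hu : u ∈ W) (hv : v ∈ W) (huv : u ≠ v)
    (hy : koszulD (X (R := R)) y ((W.erase u).erase v) = 0)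
    (hm : ∀ a ∈ m.support, a ∉ W → coeff (m + Finsupp.single u 1 + Finsupp.single v 1
      - Finsupp.single a 1) (y (insert a ((W.erase u).erase v))) = 0) :
    facetCoeff y m W u = facetCoeff y m W v := by
  set B := (W.erase u).erase v with hB
  have huB : u ∉ B := by simp [hB]
  have hvB : v ∉ B := by simp [hB]
  have insert_u : insert u B = W.erase v := by
    rw [hB, Finset.erase_right_comm, Finset.insert_erase (Finset.mem_erase.2 ⟨huv, hu⟩)]
  have insert_v : insert v B = W.erase u := by
    rw [hB, Finset.insert_erase (Finset.mem_erase.2 ⟨huv.symm, hv⟩)]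
  have boundary : koszulSign u B • coeff (m + Finsupp.single v 1) (y (W.erase v)) +
      koszulSign v B • coeff (m + Finsupp.single u 1) (y (W.erase u)) = 0 := by
    have h := congrArg (coeff (m + Finsupp.single u 1 + Finsupp.single v 1)) hy
    rw [coeff_koszulD_X, ← Finset.sum_subset (s₁ := {u, v}), Finset.sum_pair huv, insert_u,
      insert_v, add_tsub_cancel_right, add_right_comm, add_tsub_cancel_right] at h
    · exact h
    · intro a ha
      rcases Finset.mem_insert.1 ha with rfl | ha
      · simp [huB]
      · simp [Finset.mem_singleton.1 ha, hvB]
    · intro a ha hauv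
      simp only [Finset.mem_insert, Finset.mem_singleton, not_or] at hauv
      simp only [Finset.mem_sdiff, Finsupp.mem_support_iff, Finsupp.add_apply,
        Finsupp.single_eq_of_ne hauv.1, Finsupp.single_eq_of_ne hauv.2, add_zero] at ha
      rw [hm a (Finsupp.mem_support_iff.2 ha.1) fun haW => ha.2 ?_, smul_zero]
      exact Finset.mem_erase.2 ⟨hauv.2, Finset.mem_erase.2 ⟨hauv.1, haW⟩⟩
  have sign := koszulSign_mul_koszulSign_insert huv huB hvB
  rw [insert_u, insert_v, koszulSign_erase_self v W, koszulSign_erase_self u W]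
    at sign
  have combination := congrArg ((koszulSign u B * koszulSign v W) • ·) boundary
  simp only [smul_add, smul_smul, smul_zero] at combination
  rw [mul_right_comm, Int.units_mul_self, one_mul, sign, neg_mul, mul_right_comm,
    Int.units_mul_self, one_mul, Units.neg_smul, ← sub_eq_add_neg, sub_eq_zero] at combination
  exact combination.symm

lemma coeff_single_eq_zero_of_koszulD_eq_zero {y : Finset σ → MvPolynomial σ R} {A : Finset σ}
    {j : σ} (hj : j ∈ A) (hy : koszulD (X (R := R)) y (A.erase j) = 0) :
    coeff (Finsupp.single j 1) (y A) = 0 := by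
  have h := congrArg (coeff (Finsupp.single j 2)) hy
  rw [coeff_koszulD_X, Finsupp.support_single j two_ne_zero,
    Finset.sdiff_eq_self_of_disjoint (by simp), Finset.sum_singleton, Finset.insert_erase hj,
    ← Finsupp.single_tsub, coeff_zero, smul_eq_zero_iff_eq] at h
  exact h

lemma eq_sum_coeff_mul_X_of_isHomogeneous_one {p : MvPolynomial σ R} (hp : p.IsHomogeneous 1) :
    p = ∑ j, C (coeff (Finsupp.single j 1) p) * X j := by
  have hspan : p ∈ homogeneousSubmodule σ R 1 := hp
  rw [homogeneousSubmodule_one_eq_span_X] at hspan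
  clear hp
  induction hspan using Submodule.span_induction with
  | mem _ h =>
    obtain ⟨i, rfl⟩ := h
    simp [coeff_X, Finsupp.single_left_inj]
  | zero => simp
  | add p q _ _ hp hq =>
    simp only [coeff_add, C_add, add_mul, Finset.sum_add_distrib]
    rw [← hp, ← hq]
  | smul a p _ hp =>
    simp only [coeff_smul, smul_eq_mul, C_mul, mul_assoc, ← Finset.mul_sum]
    rw [← hp, smul_eq_C_mul]

/-- Exactness of the Koszul complex of `R[x]` in the strand of linear coefficients. -/
lemma exists_eq_koszulD_C {y : Finset σ → MvPolynomial σ R} (hy : ∀ A, (y A).IsHomogeneous 1)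
    {q : ℕ} (hcycle : ∀ A : Finset σ, A.card < q → koszulD (X (R := R)) y A = 0) :
    ∃ c : Finset σ → R, ∀ A : Finset σ, A.card < q + 1 →
      y A = koszulD (X (R := R)) (C ∘ c) A := by
  have facet_const (W : Finset σ) : ∃ c, W.card < q + 2 → ∀ v ∈ W, facetCoeff y 0 W v = c := by
    rcases W.eq_empty_or_nonempty with rfl | ⟨u, hu⟩
    · simp
    refine ⟨facetCoeff y 0 W u, fun hW v hv => ?_⟩
    rcases eq_or_ne v u with rfl | huv
    · rfl
    refine facetCoeff_eq_of_koszulD_eq_zero hv hu huv (hcycle _ ?_) (by simp)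
    rw [Finset.card_erase_of_mem (Finset.mem_erase.2 ⟨huv.symm, hu⟩), Finset.card_erase_of_mem hv]
    have : 1 < W.card := Finset.one_lt_card.2 ⟨v, hv, u, hu, huv⟩
    omega
  choose c hc using facet_const
  refine ⟨c, fun A hA => ?_⟩
  rw [eq_sum_coeff_mul_X_of_isHomogeneous_one (hy A), koszulD_apply]
  refine (Finset.sum_subset (Finset.subset_univ Aᶜ) fun j _ hj => ?_).symm.trans
    (Finset.sum_congr rfl fun j hj => ?_)
  · rw [Finset.mem_compl, not_not] at hj
    have hlt : (A.erase j).card < q := by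
      rw [Finset.card_erase_of_mem hj]
      have := Finset.card_pos.2 ⟨j, hj⟩
      omega
    rw [coeff_single_eq_zero_of_koszulD_eq_zero hj (hcycle _ hlt), C_0, zero_mul]
  · rw [Finset.mem_compl] at hj
    have hlt : (insert j A).card < q + 2 := by
      rw [Finset.card_insert_of_notMem hj]
      omega
    have value : c (insert j A) = koszulSign j A • coeff (Finsupp.single j 1) (y A) := by
      rw [← hc _ hlt j (Finset.mem_insert_self j A), facetCoeff, koszulSign_insert_self,
        Finset.erase_insert hj, zero_add]
    rw [Function.comp_apply, value, Units.smul_def, Units.smul_def, map_zsmul,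
      smul_comm (X j) (koszulSign j A : ℤ), smul_smul, Int.units_coe_mul_self, one_smul,
      smul_eq_mul, mul_comm]

end KoszulX

section LinearComplex

variable {σ R ι κ μ : Type*} [CommRing R] [Fintype κ] [Fintype μ]

lemma homogeneousComponent_mul_of_isHomogeneous {p : MvPolynomial σ R} {d : ℕ}
    (hp : p.IsHomogeneous d) (e : ℕ) (q : MvPolynomial σ R) :
    homogeneousComponent (d + e) (p * q) = p * homogeneousComponent e q := by
  let _ := gradedAlgebra (σ := σ) (R := R)
  rw [← decomposition.decompose'_apply, ← decomposition.decompose'_apply]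
  exact DirectSum.coe_decompose_mul_add_of_left_mem (homogeneousSubmodule σ R) hp

lemma mulVec_homogeneousComponent {P : Matrix ι κ (MvPolynomial σ R)} {d e : ℕ}
    (hP : ∀ i j, (P i j).IsHomogeneous d) {w : κ → MvPolynomial σ R}
    (hw : ∀ i, (P.mulVec w i).IsHomogeneous (d + e)) :
    P.mulVec (fun j => homogeneousComponent e (w j)) = P.mulVec w := by
  ext1 i
  rw [← homogeneousComponent_eq_self (hw i)]
  simp only [Matrix.mulVec, dotProduct, map_sum,
    homogeneousComponent_mul_of_isHomogeneous (hP i _)]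

variable [Fintype σ] [LinearOrder σ]

/-- The cokernel of the matrix `P` has no Koszul homology in homological degree `p < q` and
internal degree `p + 1`: every chain of linear forms which is a cycle modulo the image of `P`
is, modulo that image, the boundary of a chain of constants. -/
def HasLinearKoszulBoundaries (P : Matrix ι κ (MvPolynomial σ R)) (q : ℕ) : Prop :=
  ∀ y : Finset σ → ι → MvPolynomial σ R, (∀ A i, (y A i).IsHomogeneous 1) →
    (∀ A, koszulD (X (R := R)) y A ∈ P.mulVecLin.range) →
    ∃ c : Finset σ → ι → R, ∀ A : Finset σ, A.card < q →
      y A - koszulD (X (R := R)) (fun B i => C (c B i)) A ∈ P.mulVecLin.range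

/-- The connecting homomorphism of Koszul homology: a lift of `dz` along `P` is a cycle modulo
the image of `Q`, and bounding it corrects `z` to a cycle. -/
lemma HasLinearKoszulBoundaries.exists_koszulD_sub_eq_zero {P : Matrix ι κ (MvPolynomial σ R)}
    {Q : Matrix κ μ (MvPolynomial σ R)} {q d : ℕ} (hQ : HasLinearKoszulBoundaries Q q)
    (exact : Function.Exact Q.mulVecLin P.mulVecLin) (hP : ∀ i j, (P i j).IsHomogeneous d)
    {z : Finset σ → ι → MvPolynomial σ R} (hz : ∀ A i, (z A i).IsHomogeneous d)
    (hcycle : ∀ A, koszulD (X (R := R)) z A ∈ P.mulVecLin.range) :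
    ∃ c : Finset σ → κ → R, ∀ A : Finset σ, A.card < q →
      koszulD (X (R := R)) (fun B => z B - P.mulVec (fun j => C (c B j))) A = 0 := by
  have hdz (A : Finset σ) (i : ι) : (koszulD (X (R := R)) z A i).IsHomogeneous (d + 1) := by
    rw [koszulD_pi_apply]
    exact isHomogeneous_koszulD_X (fun A => hz A i) A
  choose w hw using hcycle
  let y (A : Finset σ) (j : κ) := homogeneousComponent 1 (w A j)
  have hPy : P.mulVecLin ∘ y = koszulD (X (R := R)) z := by
    ext1 A
    rw [Function.comp_apply, ← hw A]
    exact mulVec_homogeneousComponent hP fun i => by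
      rw [← Matrix.mulVecLin_apply, hw]
      exact hdz A i
  obtain ⟨c, hc⟩ := hQ y (fun A j => homogeneousComponent_isHomogeneous _ _) fun A => by
    rw [LinearMap.mem_range, ← Set.mem_range, ← exact, ← Function.comp_apply (f := P.mulVecLin),
      ← koszulD_comp, hPy, koszulD_koszulD, Pi.zero_apply]
  refine ⟨c, fun A hA => ?_⟩
  have h := (exact _).2 (hc A hA)
  rw [map_sub] at h
  change koszulD (X (R := R)) (z - P.mulVecLin ∘ fun B j => C (c B j)) A = 0
  rwa [map_sub, koszulD_comp, ← hPy]

lemma HasLinearKoszulBoundaries.of_exact {P : Matrix ι κ (MvPolynomial σ R)}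
    {Q : Matrix κ μ (MvPolynomial σ R)} {q : ℕ} (hQ : HasLinearKoszulBoundaries Q q)
    (exact : Function.Exact Q.mulVecLin P.mulVecLin) (hP : ∀ i j, (P i j).IsHomogeneous 1) :
    HasLinearKoszulBoundaries P (q + 1) := by
  intro y hy hcycle
  obtain ⟨c, hc⟩ := hQ.exists_koszulD_sub_eq_zero exact hP hy hcycle
  set y' : Finset σ → ι → MvPolynomial σ R := fun A => y A - P.mulVec (fun j => C (c A j))
  have hy' (A : Finset σ) (i : ι) : (y' A i).IsHomogeneous 1 :=
    (hy A i).sub (IsHomogeneous.sum _ _ _ fun j _ => (hP i j).mul (isHomogeneous_C _ _))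
  choose c' hc' using fun i => exists_eq_koszulD_C (fun A => hy' A i) (q := q) fun A hA => by
    rw [← koszulD_pi_apply, hc A hA, Pi.zero_apply]
  refine ⟨fun A i => c' i A, fun A hA => ⟨fun j => C (c A j), ?_⟩⟩
  ext1 i
  rw [Matrix.mulVecLin_apply, Pi.sub_apply, koszulD_pi_apply]
  exact eq_sub_of_add_eq (add_eq_of_eq_sub' (hc' i A hA).symm)

lemma hasLinearKoszulBoundaries_of_linear_exact {b : ℕ → ℕ}
    {M : ∀ i, Matrix (Fin (b i)) (Fin (b (i + 1))) (MvPolynomial σ R)}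
    (hM : ∀ i j l, (M i j l).IsHomogeneous 1)
    (exact : ∀ i, Function.Exact (M (i + 1)).mulVecLin (M i).mulVecLin) (q i : ℕ) :
    HasLinearKoszulBoundaries (M i) q := by
  induction q generalizing i with
  | zero => exact fun y _ _ => ⟨0, fun A hA => absurd hA (Nat.not_lt_zero _)⟩
  | succ q ih => exact (ih (i + 1)).of_exact (exact i) (hM i)

end LinearComplex

section KoszulCycle

variable {K}

lemma HasLinearResolution.exists_koszul_cycle {σ : Type*} [Fintype σ] [LinearOrder σ]
    {I : Ideal (MvPolynomial σ K)} {d : ℕ} (hI : HasLinearResolution K I d)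
    {z : Finset σ → MvPolynomial σ K} (hz : ∀ A, (z A).IsHomogeneous d)
    (hcycle : ∀ A, koszulD (X (R := K)) z A ∈ I) :
    ∃ z' : Finset σ → MvPolynomial σ K, (∀ A, z A - z' A ∈ I) ∧ koszulD (X (R := K)) z' = 0 := by
  obtain ⟨b, g, M, hg, rfl, hM, exact_zero, exact_succ⟩ := hI
  have exact_M (i : ℕ) : Function.Exact (M (i + 1)).mulVecLin (M i).mulVecLin := exact_succ i
  let P := Matrix.replicateRow Unit g
  have mulVec_P (v : Fin (b 0) → MvPolynomial σ K) : P.mulVec v = fun _ => ∑ j, v j * g j :=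
    funext fun _ => dotProduct_comm _ _
  have exact_P : Function.Exact (M 0).mulVecLin P.mulVecLin := fun v => by
    rw [Matrix.mulVecLin_apply, mulVec_P]
    exact ⟨fun h => (exact_zero v).1 (congrFun h ()), fun h => funext fun _ => (exact_zero v).2 h⟩
  have mem_range_P {p : MvPolynomial σ K} (hp : p ∈ Ideal.span (Set.range g)) :
      (fun _ => p) ∈ P.mulVecLin.range := by
    obtain ⟨v, rfl⟩ := Ideal.mem_span_range_iff_exists_fun.1 hp
    exact ⟨v, mulVec_P v⟩
  obtain ⟨c, hc⟩ := (hasLinearKoszulBoundaries_of_linear_exact hM exact_M (Fintype.card σ + 1)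
    0).exists_koszulD_sub_eq_zero exact_P (fun _ => hg) (z := fun A _ => z A) (fun A _ => hz A)
    fun A => by
      convert mem_range_P (hcycle A) using 1
      exact funext fun i => koszulD_pi_apply _ _ _ i
  refine ⟨fun A => z A - ∑ j, C (c A j) * g j, fun A => ?_, funext fun A => ?_⟩
  · rw [sub_sub_cancel]
    exact Ideal.sum_mem _ fun j _ => Ideal.mul_mem_left _ _ (Ideal.subset_span ⟨j, rfl⟩)
  · have h := congrFun (hc A (Nat.lt_succ_of_le (Finset.card_le_univ A))) ()
    simp only [koszulD_pi_apply, mulVec_P, Pi.sub_apply] at h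
    exact h

lemma HasLinearResolution.exists_koszul_cycle_single {σ : Type*} [Fintype σ] [LinearOrder σ]
    {I : Ideal (MvPolynomial σ K)} {d : ℕ} (hI : HasLinearResolution K I d) {B : Finset σ}
    {p : MvPolynomial σ K} (hp : p.IsHomogeneous d) (hpB : ∀ a ∈ B, X a * p ∈ I) :
    ∃ z : Finset σ → MvPolynomial σ K, p - z B ∈ I ∧ (∀ A ≠ B, z A ∈ I) ∧
      koszulD (X (R := K)) z = 0 := by
  have single_homogeneous (A : Finset σ) :
      ((Pi.single B p : Finset σ → MvPolynomial σ K) A).IsHomogeneous d := by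
    rcases eq_or_ne A B with rfl | hA
    · rwa [Pi.single_eq_same]
    · rw [Pi.single_eq_of_ne hA]
      exact isHomogeneous_zero _ _ _
  obtain ⟨z, hz, hcycle⟩ := hI.exists_koszul_cycle single_homogeneous (koszulD_X_single_mem hpB)
  refine ⟨z, by simpa only [Pi.single_eq_same] using hz B, fun A hA => ?_, hcycle⟩
  simpa only [Pi.single_eq_of_ne hA, zero_sub, neg_mem_iff] using hz A

end KoszulCycle

section Chordal

variable {V : Type*} {H : SimpleGraph V}

/-- Chordal graphs, in Dirac's form: a vertex `b` outside the closed neighbourhood of a connected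
set `A` has a clique as its set of common neighbours with `A`. Two nonadjacent such neighbours
`s`, `t` would close up a shortest path from `s` to `t` through `A` and `b` to a chordless cycle of
length at least four; conversely, the two neighbours of a vertex `b` of such a cycle violate the
condition for the path `A` formed by the remaining vertices. -/
def IsChordal (H : SimpleGraph V) : Prop :=
  ∀ (A : Set V) (b s t : V), (H.induce A).Connected → (∀ a ∈ A, Hᶜ.Adj a b) →
    (∃ a ∈ A, H.Adj a s) → (∃ a ∈ A, H.Adj a t) → H.Adj s b → H.Adj t b → s = t ∨ H.Adj s t

/-- The neighbours of `x` inside `U` form a clique. -/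
def IsSimplicialIn (H : SimpleGraph V) (U : Set V) (x : V) : Prop :=
  H.IsClique (U ∩ H.neighborSet x)

lemma eq_of_preconnected_of_forall_adj {α : Type*} (hH : H.Preconnected) {f : V → α}
    (hf : ∀ u v, H.Adj u v → f u = f v) (u v : V) : f u = f v := by
  obtain ⟨p⟩ := hH u v
  induction p with
  | nil => rfl
  | cons h _ ih => exact (hf _ _ h).trans ih

lemma connected_induce_insert {A : Set V} {a s : V} (hA : (H.induce A).Connected) (ha : a ∈ A)
    (has : H.Adj a s) : (H.induce (insert s A)).Connected := by
  rw [Set.insert_eq]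
  exact SimpleGraph.connected_induce_union SimpleGraph.Preconnected.of_subsingleton
    hA.preconnected (Set.mem_singleton s) ha has.symm

lemma exists_separation [Finite V] {U : Set V} (hU : ¬ H.IsClique U) :
    ∃ A ⊆ U, ∃ B ⊆ U, (H.induce A).Connected ∧ B.Nonempty ∧ (∀ a ∈ A, ∀ b ∈ B, Hᶜ.Adj a b) ∧
      ∀ s ∈ U \ (A ∪ B), (∃ a ∈ A, H.Adj a s) ∧ ∀ b ∈ B, H.Adj s b := by
  let IsConnectedAvoiding (A : Set V) : Prop :=
    A ⊆ U ∧ (H.induce A).Connected ∧ ∃ b ∈ U, ∀ a ∈ A, Hᶜ.Adj a b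
  obtain ⟨u, hu, v, hv, huv, hnadj⟩ : ∃ u ∈ U, ∃ v ∈ U, u ≠ v ∧ ¬ H.Adj u v := by
    simpa [SimpleGraph.isClique_iff, Set.Pairwise] using hU
  have singleton : IsConnectedAvoiding {u} :=
    ⟨Set.singleton_subset_iff.2 hu, SimpleGraph.Connected.of_subsingleton, v, hv,
      by simp [huv, hnadj]⟩
  obtain ⟨A, -, ⟨hAU, hA, b, hb, hAb⟩, hmax⟩ := Finite.exists_le_maximal singleton
  refine ⟨A, hAU, {b ∈ U | ∀ a ∈ A, Hᶜ.Adj a b}, Set.sep_subset _ _, hA, ⟨b, hb, hAb⟩,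
    fun a ha b hb => hb.2 a ha, ?_⟩
  rintro s ⟨hs, hsAB⟩
  simp only [Set.mem_union, Set.mem_ofPred_eq, not_or, not_and] at hsAB
  obtain ⟨hsA, hsB⟩ := hsAB
  obtain ⟨a, ha, has⟩ : ∃ a ∈ A, ¬ Hᶜ.Adj a s := by simpa using hsB hs
  have hadj : H.Adj a s := by
    rw [SimpleGraph.compl_adj, not_and_not_right] at has
    exact has (ne_of_mem_of_not_mem ha hsA)
  refine ⟨⟨a, ha, hadj⟩, fun c hc => ?_⟩
  by_contra hsc
  have hcs : s ≠ c := fun h => has ((h ▸ hc.2) a ha)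
  have hinsert : IsConnectedAvoiding (insert s A) :=
    ⟨Set.insert_subset hs hAU, connected_induce_insert hA ha hadj, c, hc.1,
      Set.forall_mem_insert.2 ⟨(H.compl_adj s c).2 ⟨hcs, hsc⟩, hc.2⟩⟩
  exact hsA (hmax hinsert (Set.subset_insert s A) (Set.mem_insert s A))

lemma IsChordal.isClique_separator (hH : IsChordal H) {U A B : Set V} (hA : (H.induce A).Connected)
    (hB : B.Nonempty) (hAB : ∀ a ∈ A, ∀ b ∈ B, Hᶜ.Adj a b)
    (hS : ∀ s ∈ U \ (A ∪ B), (∃ a ∈ A, H.Adj a s) ∧ ∀ b ∈ B, H.Adj s b) :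
    H.IsClique (U \ (A ∪ B)) := by
  obtain ⟨b, hb⟩ := hB
  intro s hs t ht hst
  exact (hH A b s t hA (fun a ha => hAB a ha b hb) (hS s hs).1 (hS t ht).1 ((hS s hs).2 b hb)
    ((hS t ht).2 b hb)).resolve_left hst

/-- Dirac's dichotomy: `U` is a clique or has two nonadjacent simplicial vertices. -/
def IsCliqueOrHasSimplicialPair (H : SimpleGraph V) (U : Set V) : Prop :=
  H.IsClique U ∨ ∃ x ∈ U, ∃ y ∈ U, Hᶜ.Adj x y ∧ IsSimplicialIn H U x ∧ IsSimplicialIn H U y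

lemma IsSimplicialIn.of_sdiff {U B : Set V} {x : V} (hx : IsSimplicialIn H (U \ B) x)
    (hB : ∀ b ∈ B, Hᶜ.Adj x b) : IsSimplicialIn H U x := by
  refine SimpleGraph.IsClique.subset ?_ hx
  rintro v ⟨hvU, hxv⟩
  exact ⟨⟨hvU, fun hvB => (hB v hvB).2 hxv⟩, hxv⟩

lemma IsCliqueOrHasSimplicialPair.exists_isSimplicialIn {U T : Set V}
    (hU : IsCliqueOrHasSimplicialPair H U) (hT : T.Nonempty)
    (hclique : H.IsClique (U \ T)) : ∃ x ∈ T, IsSimplicialIn H U x := by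
  rcases hU with hU | ⟨x, hxU, y, hyU, hxy, hx, hy⟩
  · obtain ⟨x, hxT⟩ := hT
    exact ⟨x, hxT, hU.subset Set.inter_subset_left⟩
  by_cases hxT : x ∈ T
  · exact ⟨x, hxT, hx⟩
  by_cases hyT : y ∈ T
  · exact ⟨y, hyT, hy⟩
  exact absurd (hclique ⟨hxU, hxT⟩ ⟨hyU, hyT⟩ hxy.1) hxy.2

lemma IsChordal.isCliqueOrHasSimplicialPair [Finite V] (hH : IsChordal H) (U : Set V) :
    IsCliqueOrHasSimplicialPair H U := by
  induction U using WellFoundedLT.induction with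
  | ind U ih =>
  by_cases hU : H.IsClique U
  · exact Or.inl hU
  obtain ⟨A, hAU, B, hBU, hA, hB, hAB, hS⟩ := exists_separation hU
  have hsep := hH.isClique_separator hA hB hAB hS
  have hA' : A.Nonempty := Set.nonempty_coe_sort.1 hA.nonempty
  obtain ⟨x, hxA, hx⟩ := (ih (U \ B) (hBU.sdiff_ssubset_of_nonempty hB)).exists_isSimplicialIn hA'
    (by rwa [Set.sdiff_sdiff, Set.union_comm])
  obtain ⟨y, hyB, hy⟩ := (ih (U \ A) (hAU.sdiff_ssubset_of_nonempty hA')).exists_isSimplicialIn hB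
    (by rwa [Set.sdiff_sdiff])
  exact Or.inr ⟨x, hAU hxA, y, hBU hyB, hAB x hxA y hyB, hx.of_sdiff fun b hb => hAB x hxA b hb,
    hy.of_sdiff fun a ha => (hAB a ha y hyB).symm⟩

end Chordal

section MonomialPrimes

variable {σ R : Type*} [CommRing R]

lemma isPrime_span_X_image [IsDomain R] (N : Set σ) :
    (Ideal.span (X '' N : Set (MvPolynomial σ R))).IsPrime := by
  classical
  let φ : MvPolynomial σ R →ₐ[R] MvPolynomial σ R := aeval fun i => if i ∈ N then 0 else X i
  have sub_mem (p : MvPolynomial σ R) : p - φ p ∈ Ideal.span (X '' N) := by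
    induction p using MvPolynomial.induction_on with
    | C a => simp [φ]
    | add p q hp hq => simpa only [map_add, add_sub_add_comm] using Ideal.add_mem _ hp hq
    | mul_X p i hp =>
      by_cases hi : i ∈ N
      · have hφ : φ (X i) = 0 := by simp [φ, hi]
        rw [map_mul, hφ, mul_zero, sub_zero]
        exact Ideal.mul_mem_left _ _ (Ideal.subset_span ⟨i, hi, rfl⟩)
      · have hφ : φ (X i) = X i := by simp [φ, hi]
        rw [map_mul, hφ, ← sub_mul]
        exact Ideal.mul_mem_right _ _ hp
  have span_eq_ker : Ideal.span (X '' N) = RingHom.ker φ := by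
    refine le_antisymm (Ideal.span_le.2 ?_) fun p hp => ?_
    · rintro _ ⟨i, hi, rfl⟩
      simp [φ, RingHom.mem_ker, hi]
    · simpa only [RingHom.mem_ker.1 hp, sub_zero] using sub_mem p
  rw [span_eq_ker]
  exact RingHom.ker_isPrime φ

lemma one_le_weight_indicator_iff {N : Set σ} {m : σ →₀ ℕ} :
    1 ≤ Finsupp.weight (N.indicator (1 : σ → ℕ)) m ↔ ∃ i ∈ N, m i ≠ 0 := by
  classical
  simp only [Nat.one_le_iff_ne_zero, Finsupp.weight_apply, Finsupp.sum, Set.indicator_apply]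
  aesop

lemma le_weight_of_mem_span_X_image_pow {N : Set σ} {k : ℕ} {p : MvPolynomial σ R}
    (hp : p ∈ Ideal.span (X '' N) ^ k) {m : σ →₀ ℕ} (hm : m ∈ p.support) :
    k ≤ Finsupp.weight (N.indicator (1 : σ → ℕ)) m := by
  classical
  induction k generalizing p m with
  | zero => exact Nat.zero_le _
  | succ k ih =>
    rw [pow_succ] at hp
    induction hp using Submodule.mul_induction_on' generalizing m with
    | mem_mul_mem a ha b hb =>
      obtain ⟨u, hu, v, hv, rfl⟩ := Finset.mem_add.1 (support_mul a b hm)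
      rw [map_add]
      exact add_le_add (ih ha hu)
        (one_le_weight_indicator_iff.2 (mem_ideal_span_X_image.1 hb v hv))
    | add a _ b _ ha hb => exact (Finset.mem_union.1 (support_add hm)).elim ha hb

lemma le_succ_of_X_mem_colon [IsDomain R] {I : Ideal (MvPolynomial σ R)} {d e : ℕ}
    (hI : I ≤ idealOfVars σ R ^ d) {f : MvPolynomial σ R} (hf : f.IsHomogeneous e) (hf0 : f ≠ 0)
    {z : σ} (hz : X z ∈ I.colon (Ideal.span {f})) : d ≤ e + 1 := by
  obtain ⟨m, hm⟩ := support_nonempty.2 (mul_ne_zero (X_ne_zero z) hf0)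
  have hdegree : m.degree = 1 + e := by
    rw [Finsupp.degree_eq_weight_one]
    exact ((isHomogeneous_X R z).mul hf) (mem_support_iff.1 hm)
  have hle := (mem_pow_idealOfVars_iff d _).1 (hI (Ideal.mem_colon_span_singleton.1 hz)) m hm
  omega

end MonomialPrimes

section EdgeIdeal

variable {K} {n : ℕ} {G : SimpleGraph (Fin n)} {x y : Fin n}

lemma X_mul_X_mem_edgeIdeal (hxy : G.Adj x y) : X x * X y ∈ edgeIdeal K G :=
  Ideal.subset_span ⟨x, y, hxy, rfl⟩

lemma edgeIdeal_le_span_X_image {N : Set (Fin n)} (hN : G.IsVertexCover N) :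
    edgeIdeal K G ≤ Ideal.span (X '' N) := by
  refine Ideal.span_le.2 ?_
  rintro _ ⟨i, j, hij, rfl⟩
  rcases hN hij with hi | hj
  · exact Ideal.mul_mem_right _ _ (Ideal.subset_span ⟨i, hi, rfl⟩)
  · exact Ideal.mul_mem_left _ _ (Ideal.subset_span ⟨j, hj, rfl⟩)

lemma edgeIdeal_le_idealOfVars_sq : edgeIdeal K G ≤ idealOfVars (Fin n) K ^ 2 := by
  refine Ideal.span_le.2 ?_
  rintro _ ⟨i, j, -, rfl⟩
  rw [sq]
  exact Ideal.mul_mem_mul (Ideal.subset_span ⟨i, rfl⟩) (Ideal.subset_span ⟨j, rfl⟩)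

lemma coeff_eq_zero_of_mem_edgeIdeal {p : MvPolynomial (Fin n) K} (hp : p ∈ edgeIdeal K G)
    (hxy : ¬ G.Adj x y) : coeff (Finsupp.single x 1 + Finsupp.single y 1) p = 0 := by
  have cover : G.IsVertexCover {x, y}ᶜ := by
    rw [SimpleGraph.isVertexCover_compl]
    exact Set.pairwise_pair.2 fun _ => ⟨hxy, fun h => hxy h.symm⟩
  by_contra hm
  obtain ⟨i, hi, him⟩ :=
    mem_ideal_span_X_image.1 (edgeIdeal_le_span_X_image cover hp) _ (mem_support_iff.2 hm)
  simp only [Set.mem_compl_iff, Set.mem_insert_iff, Set.mem_singleton_iff, not_or] at hi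
  simp [Finsupp.single_eq_of_ne hi.1, Finsupp.single_eq_of_ne hi.2] at him

lemma weight_indicator_neighborSet (hxy : G.Adj x y) (k : ℕ) :
    Finsupp.weight ((G.neighborSet x).indicator (1 : Fin n → ℕ))
      (Finsupp.single x 1 + k • (Finsupp.single x 1 + Finsupp.single y 1)) = k := by
  simp [Finsupp.weight_single, hxy]

lemma colon_edgeIdeal_pow (hxy : G.Adj x y) (hx : G.IsVertexCover (G.neighborSet x)) (k : ℕ) :
    (edgeIdeal K G ^ (k + 1)).colon (Ideal.span {(X x * (X x * X y) ^ k : MvPolynomial _ K)}) =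
      Ideal.span (X '' G.neighborSet x) := by
  refine le_antisymm (fun p hp => mem_ideal_span_X_image.2 fun m hm => ?_) (Ideal.span_le.2 ?_)
  · rw [Ideal.mem_colon_span_singleton] at hp
    have monomial_eq : (X x * (X x * X y) ^ k : MvPolynomial (Fin n) K) =
        monomial (Finsupp.single x 1 + k • (Finsupp.single x 1 + Finsupp.single y 1)) 1 := by
      simp only [X, monomial_mul, monomial_pow, one_pow, mul_one]
    have hmem := Ideal.pow_right_mono (edgeIdeal_le_span_X_image hx) (k + 1) hp
    rw [monomial_eq] at hmem
    have hweight := le_weight_of_mem_span_X_image_pow hmem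
      (m := m + (Finsupp.single x 1 + k • (Finsupp.single x 1 + Finsupp.single y 1)))
      (by rwa [mem_support_iff, coeff_mul_monomial, mul_one, ← mem_support_iff])
    rw [map_add, weight_indicator_neighborSet hxy, add_comm, add_le_add_iff_right] at hweight
    exact one_le_weight_indicator_iff.1 hweight
  · rintro _ ⟨i, hi, rfl⟩
    rw [SetLike.mem_coe, Ideal.mem_colon_span_singleton, ← mul_assoc, pow_succ']
    exact Ideal.mul_mem_mul (X_mul_X_mem_edgeIdeal (SimpleGraph.Adj.symm hi))
      (Ideal.pow_mem_pow (X_mul_X_mem_edgeIdeal hxy) k)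

end EdgeIdeal

section VNumber

variable {K}

lemma colon_mem_assPrimes {σ : Type*} {I : Ideal (MvPolynomial σ K)} {f : MvPolynomial σ K}
    (hprime : (I.colon (Ideal.span {f})).IsPrime) : I.colon (Ideal.span {f}) ∈ assPrimes K I := by
  refine ⟨hprime, Ideal.Quotient.mk I f, ?_⟩
  have colon_eq : (⊥ : Submodule _ (MvPolynomial σ K ⧸ I)).colon {Ideal.Quotient.mk I f} =
      I.colon (Ideal.span {f}) := by
    ext p
    rw [Ideal.mem_colon_span_singleton, Submodule.mem_colon_singleton, Submodule.mem_bot,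
      ← Ideal.Quotient.eq_zero_iff_mem, map_mul]
    rfl
  rw [colon_eq, hprime.isRadical.radical]

variable {n : ℕ} {G : SimpleGraph (Fin n)} {x y : Fin n}

lemma le_succ_of_isPrime_colon_edgeIdeal_pow (hxy : G.Adj x y) {k e : ℕ}
    {f : MvPolynomial (Fin n) K} (hf : f.IsHomogeneous e)
    (hprime : ((edgeIdeal K G ^ k).colon (Ideal.span {f})).IsPrime) : 2 * k ≤ e + 1 := by
  have hf0 : f ≠ 0 := by
    rintro rfl
    exact hprime.one_notMem (Ideal.mem_colon_span_singleton.2 (by simp))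
  have hpow : edgeIdeal K G ^ k ≤ idealOfVars (Fin n) K ^ (2 * k) := by
    rw [pow_mul]
    exact Ideal.pow_right_mono edgeIdeal_le_idealOfVars_sq k
  have edge_mem : (X x * X y) ^ k ∈ (edgeIdeal K G ^ k).colon (Ideal.span {f}) :=
    Ideal.mem_colon_span_singleton.2
      (Ideal.mul_mem_right _ _ (Ideal.pow_mem_pow (X_mul_X_mem_edgeIdeal hxy) k))
  rcases hprime.mem_or_mem (hprime.mem_of_pow_mem k edge_mem) with hX | hX <;>
    exact le_succ_of_X_mem_colon hpow hf hf0 hX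

theorem vNumber_edgeIdeal_pow_of_isVertexCover (hxy : G.Adj x y)
    (hx : G.IsVertexCover (G.neighborSet x)) {k : ℕ} (hk : 1 ≤ k) :
    vNumber K (edgeIdeal K G ^ k) = 2 * k - 1 := by
  obtain ⟨k, rfl⟩ := Nat.exists_eq_add_of_le' hk
  refine IsLeast.csInf_eq ⟨⟨X x * (X x * X y) ^ k, ?_, colon_mem_assPrimes ?_⟩, ?_⟩
  · convert (isHomogeneous_X K x).mul
      (((isHomogeneous_X K x).mul (isHomogeneous_X K y)).pow k) using 1
    omega
  · rw [colon_edgeIdeal_pow hxy hx]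
    exact isPrime_span_X_image _
  · rintro e ⟨f, hf, hass⟩
    exact Nat.sub_le_of_le_add (le_succ_of_isPrime_colon_edgeIdeal_pow hxy hf hass.1)

end VNumber

section Froberg

variable {K} {n : ℕ} {G : SimpleGraph (Fin n)}

/-- The function is `v ↦ facetCoeff z x_b W v`, where `z` is a Koszul cycle congruent modulo the
edge ideal to the single term `x_b x_s e_{W \ s}`. -/
lemma HasLinearResolution.exists_eq_of_compl_adj (hG : HasLinearResolution K (edgeIdeal K G) 2)
    {W : Finset (Fin n)} {s b : Fin n} (hb : b ∉ W) (hbs : ¬ G.Adj b s)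
    (hW : ∀ w ∈ W, w ≠ s → G.Adj w s ∨ G.Adj w b) :
    ∃ φ : Fin n → K, φ s ≠ 0 ∧ (∀ v ∈ W, v ≠ s → ¬ G.Adj b v → φ v = 0) ∧
      ∀ u ∈ W, ∀ v ∈ W, Gᶜ.Adj u v → φ u = φ v := by
  have X_mul_mem (w : Fin n) (hw : w ∈ W.erase s) : X w * (X b * X s) ∈ edgeIdeal K G := by
    obtain ⟨hws, hwW⟩ := Finset.mem_erase.1 hw
    rcases hW w hwW hws with h | h
    · rw [mul_left_comm]
      exact Ideal.mul_mem_left _ _ (X_mul_X_mem_edgeIdeal h)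
    · rw [← mul_assoc]
      exact Ideal.mul_mem_right _ _ (X_mul_X_mem_edgeIdeal h)
  obtain ⟨z, hzs, hz, hcycle⟩ := hG.exists_koszul_cycle_single
    ((isHomogeneous_X K b).mul (isHomogeneous_X K s)) X_mul_mem
  refine ⟨facetCoeff z (Finsupp.single b 1) W, ?_, fun v hv hvs hbv => ?_, fun u hu v hv huv => ?_⟩
  · have h := coeff_eq_zero_of_mem_edgeIdeal hzs hbs
    rw [coeff_sub, coeff_X_mul, coeff_X_same, sub_eq_zero] at h
    rw [facetCoeff, ← h]
    exact (smul_ne_zero_iff_ne _).2 one_ne_zero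
  · have hne : W.erase v ≠ W.erase s := fun h =>
      Finset.notMem_erase v W (h ▸ Finset.mem_erase.2 ⟨hvs, hv⟩)
    rw [facetCoeff, coeff_eq_zero_of_mem_edgeIdeal (hz _ hne) hbv, smul_zero]
  · refine facetCoeff_eq_of_koszulD_eq_zero hu hv huv.ne (congrFun hcycle _) fun a ha _ => ?_
    obtain rfl : a = b := by simpa using Finsupp.support_single_subset ha
    have hne : insert a ((W.erase u).erase v) ≠ W.erase s := fun h =>
      hb (Finset.mem_of_mem_erase (h ▸ Finset.mem_insert_self a _))
    rw [add_assoc, add_tsub_cancel_left, coeff_eq_zero_of_mem_edgeIdeal (hz _ hne) huv.2]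

/-- The implication of Fröberg's theorem that does not depend on the characteristic. -/
theorem HasLinearResolution.isChordal_compl (hG : HasLinearResolution K (edgeIdeal K G) 2) :
    IsChordal Gᶜ := by
  classical
  rintro A b s t hA hAb ⟨a, ha, has⟩ ⟨a', ha', hat⟩ hsb htb
  rw [compl_compl] at hAb
  by_contra! hst
  have hadj : G.Adj t s := by
    by_contra h
    exact hst.2 ⟨hst.1, fun h' => h h'.symm⟩
  let U : Set (Fin n) := insert s (insert t A)
  have hU : (Gᶜ.induce U).Connected :=
    connected_induce_insert (connected_induce_insert hA ha' hat) (Set.mem_insert_of_mem t ha) has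
  have hbU : b ∉ U := by
    rintro (rfl | rfl | hbA)
    · exact hsb.ne rfl
    · exact htb.ne rfl
    · exact (hAb b hbA).ne rfl
  have hUs (w : Fin n) (hw : w ∈ U) (hws : w ≠ s) : G.Adj w s ∨ G.Adj w b := by
    rcases hw with rfl | rfl | hwA
    · exact absurd rfl hws
    · exact Or.inl hadj
    · exact Or.inr (hAb w hwA)
  obtain ⟨φ, hφs, hφ, hφ_adj⟩ := hG.exists_eq_of_compl_adj (W := U.toFinset) (s := s) (b := b)
    (by simpa using hbU) (fun h => hsb.2 h.symm) (by simpa using hUs)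
  simp only [Set.mem_toFinset] at hφ hφ_adj
  refine hφs ?_
  calc φ s = φ t := eq_of_preconnected_of_forall_adj hU.preconnected (f := fun v : U => φ v)
        (fun u v huv => hφ_adj u u.2 v v.2 huv) ⟨s, by simp [U]⟩ ⟨t, by simp [U]⟩
    _ = 0 := hφ t (by simp [U]) hst.1.symm fun h => htb.2 h.symm

lemma IsSimplicialIn.isVertexCover {x : Fin n} (hx : IsSimplicialIn Gᶜ Set.univ x) :
    G.IsVertexCover (G.neighborSet x) := by
  intro u v huv
  by_contra! hx'
  obtain ⟨hxu, hxv⟩ := hx'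
  have hxu_ne : x ≠ u := fun h => hxv (h ▸ huv)
  have hxv_ne : x ≠ v := fun h => hxu (h ▸ huv.symm)
  exact (hx ⟨Set.mem_univ u, hxu_ne, hxu⟩ ⟨Set.mem_univ v, hxv_ne, hxv⟩ huv.ne).2 huv

end Froberg

/-- If the edge ideal `I(G)` has a linear resolution, then `v(I(G)^k) = 2k - 1`
for all `k ≥ 1`. -/
theorem stmt14 {n : ℕ} (G : SimpleGraph (Fin n)) (he : G.edgeSet.Nonempty)
    (hlin : HasLinearResolution K (edgeIdeal K G) 2) :
    ∀ k : ℕ, 1 ≤ k → vNumber K ((edgeIdeal K G) ^ k) = 2 * k - 1 := by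
  intro k hk
  rcases hlin.isChordal_compl.isCliqueOrHasSimplicialPair Set.univ with
    hclique | ⟨x, -, y, -, hxy, hx, -⟩
  · obtain ⟨⟨u, v⟩, huv⟩ := he
    exact absurd huv (hclique (Set.mem_univ u) (Set.mem_univ v) (SimpleGraph.Adj.ne huv)).2
  · rw [compl_compl] at hxy
    exact vNumber_edgeIdeal_pow_of_isVertexCover hxy hx.isVertexCover hk

end
end
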